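/- In the path-constrained railway transition system, suppose a safe configuration s is reachable from a configuration k₀. Then every safe configuration s' that is non-regressive with respect to s (i.e., s i ≤ s' i for every train i) is also reachable from k₀. (Feasibility of reaching some safe terminal assignment implies feasibility of reaching any longer, safe, non-regressive terminal assignment.) -/

import Mathlib

/-- A *single move*: one train `i` advances one step along its path, the
destination node having a free slot not counting train `i`. -/
def Move {I N : Type*} [Fintype I] [DecidableEq I] [DecidableEq N]
    (c : N → ℕ) (L : I → ℕ) (p : ∀ i : I, Fin (L i + 1) → N)
    (k k' : ∀ i : I, Fin (L i + 1)) : Prop :=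
  ∃ (i : I) (h : (k i : ℕ) < L i),
    k' i = ⟨(k i : ℕ) + 1, Nat.succ_lt_succ h⟩ ∧
    (∀ j : I, j ≠ i → k' j = k j) ∧
    (Finset.univ.filter (fun j : I =>
        j ≠ i ∧ p j (k j) = p i ⟨(k i : ℕ) + 1, Nat.succ_lt_succ h⟩)).card
      < c (p i ⟨(k i : ℕ) + 1, Nat.succ_lt_succ h⟩)

/-- Reachability: reflexive–transitive closure of the single-move relation. -/
def Reachable {I N : Type*} [Fintype I] [DecidableEq I] [DecidableEq N]
    (c : N → ℕ) (L : I → ℕ) (p : ∀ i : I, Fin (L i + 1) → N)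
    (k k' : ∀ i : I, Fin (L i + 1)) : Prop :=
  Relation.ReflTransGen (Move c L p) k k'

/-- A configuration is *safe* if every node has a strictly free slot. -/
def SafeConfig {I N : Type*} [Fintype I] [DecidableEq I] [DecidableEq N]
    (c : N → ℕ) (L : I → ℕ) (p : ∀ i : I, Fin (L i + 1) → N)
    (k : ∀ i : I, Fin (L i + 1)) : Prop :=
  ∀ n : N, (Finset.univ.filter (fun i : I => p i (k i) = n)).card < c n

/-!
A configuration that is safe except possibly for one train `i` can let `i` advance without losing
this property, since the slots taken by the other trains are unchanged. The privileged train can be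
exchanged for any other train at its node. If no train at that node still has to advance towards the
safe target, then all trains there are also there in the target, so the node has a free slot and the
configuration is safe outright; any train may then be privileged. So until the target is reached,
there is always a train that has not arrived and is free to advance.
-/

/-- Every node has a free slot when train `i` is not counted. This is what allows `i` to advance
freely, since the condition does not depend on the position of `i`. -/
def SafeExcept {I N : Type*} [Fintype I] [DecidableEq I] [DecidableEq N]
    (c : N → ℕ) (L : I → ℕ) (p : ∀ i : I, Fin (L i + 1) → N)
    (i : I) (k : ∀ i : I, Fin (L i + 1)) : Prop :=
  ∀ n : N, (Finset.univ.filter (fun j : I => j ≠ i ∧ p j (k j) = n)).card < c n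

section

variable {I N : Type*} [Fintype I] [DecidableEq I] [DecidableEq N]
  {c : N → ℕ} {L : I → ℕ} {p : ∀ i : I, Fin (L i + 1) → N}
  {k s : ∀ i : I, Fin (L i + 1)} {i j : I}

theorem SafeConfig.safeExcept (hk : SafeConfig c L p k) (i : I) : SafeExcept c L p i k :=
  fun n => (Finset.card_le_card (Finset.monotone_filter_right _ fun _ _ h => h.2)).trans_lt (hk n)

namespace SafeExcept

theorem update (hk : SafeExcept c L p i k) (a : Fin (L i + 1)) :
    SafeExcept c L p i (Function.update k i a) := by
  intro n
  have same_others : ∀ j, j ≠ i ∧ p j (Function.update k i a j) = n ↔ j ≠ i ∧ p j (k j) = n :=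
    fun j => and_congr_right fun hj => by rw [Function.update_of_ne hj]
  simpa only [same_others] using hk n

theorem move_update (hk : SafeExcept c L p i k) {a : Fin (L i + 1)} (ha : k i ⋖ a) :
    Move c L p k (Function.update k i a) := by
  have ha_val : (k i : ℕ) + 1 = a :=
    Nat.covBy_iff_add_one_eq.mp (Fin.covBy_iff.mp ha)
  have h_lt : (k i : ℕ) < L i := by omega
  refine ⟨i, h_lt, ?_, fun j hj => Function.update_of_ne hj _ _, hk _⟩
  rw [Function.update_self]
  exact Fin.ext ha_val.symm

theorem of_same_node (hi : SafeExcept c L p i k) (hij : p i (k i) = p j (k j)) :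
    SafeExcept c L p j k := by
  have others_eq_erase (l : I) (n : N) :
      Finset.univ.filter (fun j => j ≠ l ∧ p j (k j) = n) =
        (Finset.univ.filter fun j => p j (k j) = n).erase l := by
    ext; simp
  intro n
  simpa only [others_eq_erase, Finset.card_erase_eq_ite, Finset.mem_filter_univ, hij] using hi n

theorem safeConfig_of_arrived (hk : SafeExcept c L p i k) (hs : SafeConfig c L p s)
    (arrived : ∀ j, p j (k j) = p i (k i) → k j = s j) : SafeConfig c L p k := by
  intro n
  by_cases hn : n = p i (k i)
  · refine (Finset.card_le_card ?_).trans_lt (hs n)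
    exact Finset.monotone_filter_right _ fun j _ hj => arrived j (hj.trans hn) ▸ hj
  · refine (Finset.card_le_card ?_).trans_lt (hk n)
    refine Finset.monotone_filter_right _ fun j _ hj => ⟨?_, hj⟩
    rintro rfl
    exact hn hj.symm

theorem exists_lt_safeExcept (hk : SafeExcept c L p i k) (hs : SafeConfig c L p s) (hks : k < s) :
    ∃ j, k j < s j ∧ SafeExcept c L p j k := by
  by_cases h : ∃ j, p j (k j) = p i (k i) ∧ k j < s j
  · obtain ⟨j, same_node, hj⟩ := h
    exact ⟨j, hj, hk.of_same_node same_node.symm⟩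
  · have arrived : ∀ j, p j (k j) = p i (k i) → k j = s j := fun j same_node =>
      (hks.le j).eq_of_not_lt fun hj => h ⟨j, same_node, hj⟩
    obtain ⟨j, hj⟩ := (Pi.lt_def.mp hks).2
    exact ⟨j, hj, (hk.safeConfig_of_arrived hs arrived).safeExcept j⟩

theorem reachable_of_le (hk : SafeExcept c L p i k) (hs : SafeConfig c L p s) (hks : k ≤ s) :
    Reachable c L p k s := by
  induction k using WellFoundedGT.induction generalizing i with
  | ind k ih =>
    obtain rfl | k_lt_s := hks.eq_or_lt
    · exact Relation.ReflTransGen.refl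
    obtain ⟨j, hj, safe_except_j⟩ := hk.exists_lt_safeExcept hs k_lt_s
    obtain ⟨a, k_covBy_a, a_le_s⟩ := exists_covBy_le_of_lt hj
    have progress : k < Function.update k j a := lt_update_self_iff.mpr k_covBy_a.lt
    have below_s : Function.update k j a ≤ s := update_le_iff.mpr ⟨a_le_s, fun l _ => hks l⟩
    exact (ih _ progress (safe_except_j.update a) below_s).head
      (safe_except_j.move_update k_covBy_a)

end SafeExcept

end

/-- if a safe configuration `s` is reachable from `k₀`, then every
safe configuration `s'` that is non-regressive with respect to `s` is also
reachable from `k₀`. -/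
theorem reachable_safe_extension
    {I N : Type*} [Fintype I] [DecidableEq I] [DecidableEq N]
    (c : N → ℕ) (L : I → ℕ) (p : ∀ i : I, Fin (L i + 1) → N)
    (k₀ s s' : ∀ i : I, Fin (L i + 1))
    (hreach : Reachable c L p k₀ s)
    (hs : SafeConfig c L p s) (hs' : SafeConfig c L p s')
    (hnr : ∀ i : I, (s i : ℕ) ≤ (s' i : ℕ)) :
    Reachable c L p k₀ s' := by
  obtain _ | ⟨⟨i⟩⟩ := isEmpty_or_nonempty I
  · rwa [Subsingleton.elim s' s]
  · exact hreach.trans ((hs.safeExcept i).reachable_of_le hs' hnr)
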